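/- arXiv:2512.17980 — 2 statements merged into one kernel-verified Lean document; each statement's English description precedes it below -/
import Mathlib

section
/- Let P be a Pauli string on n qubits with labeling p. If p is neither the all-identity labeling nor a labeling having exactly one position labeled Z and the identity at all other positions, then the Pauli coefficient α_P = 2^{−n} · Σ_{x=0}^{2^n−1} (a + d·x) · P_{x,x} of the diagonal matrix D vanishes, i.e. α_P = 0. -/
/-- Labels for single-qubit Pauli matrices. -/
inductive PauliLabel
  | I | X | Y | Z
  deriving DecidableEq

/-- The single-qubit Pauli matrices. -/
noncomputable def pauliMat : PauliLabel → Matrix (Fin 2) (Fin 2) ℂ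
  | PauliLabel.I => 1
  | PauliLabel.X => !![0, 1; 1, 0]
  | PauliLabel.Y => !![0, -Complex.I; Complex.I, 0]
  | PauliLabel.Z => !![1, 0; 0, -1]

/-- The `j`-th binary digit of `x`, as an element of `Fin 2`. -/
def bitF (j x : ℕ) : Fin 2 := if Nat.testBit x j then 1 else 0

/-- The Pauli string on `n` qubits with labeling `p`, realized entrywise as
`P_{x,y} = ∏_j (σ_{p_j})_{x_j, y_j}`. -/
noncomputable def pauliString (n : ℕ) (p : Fin n → PauliLabel) :
    Matrix (Fin (2 ^ n)) (Fin (2 ^ n)) ℂ :=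
  fun x y => ∏ j : Fin n, pauliMat (p j) (bitF j.val x.val) (bitF j.val y.val)

/-! Sum a function of bit strings `b` that is itself a sum of single-bit functions against a product
weight `∏ j, w j (b j)`. By distributivity, each single-bit term is a product over the positions in
which every factor but one is a full sum `∑ t, w j t`. For a Pauli string `w j` is the diagonal of
`σ_{p_j}`, so these sums are traces, and two non-identity labels leave a vanishing trace in every
term. The index `x = ∑ j, x_j * 2 ^ j` is such a sum of single-bit functions. A single non-identity
label other than `Z` is `X` or `Y`, whose diagonal vanishes. -/

section ProductWeights

variable {ι κ R : Type*} [Fintype ι] [DecidableEq ι] [Fintype κ] [CommSemiring R]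

lemma sum_apply_mul_prod_eq_zero {w : ι → κ → R} {i k : ι} (hki : k ≠ i)
    (hk : ∑ t, w k t = 0) (f : κ → R) :
    ∑ b : ι → κ, f (b i) * ∏ j, w j (b j) = 0 :=
  calc ∑ b : ι → κ, f (b i) * ∏ j, w j (b j)
      = ∑ b : ι → κ, ∏ j, (if j = i then f (b j) else 1) * w j (b j) := by
        simp only [Finset.prod_mul_distrib, Finset.prod_ite_eq', Finset.mem_univ, if_true]
    _ = ∏ j, ∑ t, (if j = i then f t else 1) * w j t := by
        rw [Finset.prod_univ_sum, Fintype.piFinset_univ]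
    _ = 0 := Finset.prod_eq_zero (Finset.mem_univ k) (by simpa only [if_neg hki, one_mul] using hk)

lemma sum_add_sum_apply_mul_prod_eq_zero {w : ι → κ → R} {k l : ι} (hkl : k ≠ l)
    (hk : ∑ t, w k t = 0) (hl : ∑ t, w l t = 0) (c : R) (f : ι → κ → R) :
    ∑ b : ι → κ, (c + ∑ i, f i (b i)) * ∏ j, w j (b j) = 0 := by
  have hconst : ∑ b : ι → κ, c * ∏ j, w j (b j) = 0 :=
    sum_apply_mul_prod_eq_zero hkl hk fun _ => c
  have hsingle (i : ι) : ∑ b : ι → κ, f i (b i) * ∏ j, w j (b j) = 0 := by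
    rcases ne_or_eq k i with hki | rfl
    · exact sum_apply_mul_prod_eq_zero hki hk (f i)
    · exact sum_apply_mul_prod_eq_zero hkl.symm hl (f k)
  simp only [add_mul, Finset.sum_mul, Finset.sum_add_distrib, hconst, zero_add]
  rw [Finset.sum_comm]
  exact Finset.sum_eq_zero fun i _ => hsingle i

end ProductWeights

lemma bitF_finFunctionFinEquiv {n : ℕ} (b : Fin n → Fin 2) (j : Fin n) :
    bitF j (finFunctionFinEquiv b) = b j := by
  have hdigit : ((finFunctionFinEquiv b : Fin (2 ^ n)) : ℕ) / 2 ^ (j : ℕ) % 2 = b j := by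
    rw [← finFunctionFinEquiv_symm_apply_val, Equiv.symm_apply_apply]
  rw [bitF, Nat.testBit_eq_decide_div_mod_eq, hdigit]
  generalize b j = t
  fin_cases t <;> rfl

lemma natCast_eq_sum_bitF {R : Type*} [Semiring R] {n : ℕ} (x : Fin (2 ^ n)) :
    ((x : ℕ) : R) = ∑ j : Fin n, ((bitF j x : ℕ) : R) * 2 ^ (j : ℕ) := by
  obtain ⟨b, rfl⟩ := finFunctionFinEquiv.surjective x
  simp only [bitF_finFunctionFinEquiv]
  simp only [finFunctionFinEquiv_apply, Nat.cast_sum, Nat.cast_mul, Nat.cast_pow, Nat.cast_ofNat]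

lemma trace_pauliMat_eq_zero {q : PauliLabel} (hq : q ≠ PauliLabel.I) :
    (pauliMat q).trace = 0 := by
  cases q <;> simp_all [pauliMat, Matrix.trace_fin_two]

lemma pauliMat_apply_self_eq_zero {q : PauliLabel} (hI : q ≠ PauliLabel.I)
    (hZ : q ≠ PauliLabel.Z) (t : Fin 2) : pauliMat q t t = 0 := by
  cases q <;> fin_cases t <;> simp_all [pauliMat]

lemma pauliString_apply_self_eq_zero {n : ℕ} {p : Fin n → PauliLabel} {k : Fin n}
    (hI : p k ≠ PauliLabel.I) (hZ : p k ≠ PauliLabel.Z) (x : Fin (2 ^ n)) :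
    pauliString n p x x = 0 :=
  Finset.prod_eq_zero (Finset.mem_univ k) (pauliMat_apply_self_eq_zero hI hZ _)

lemma sum_mul_pauliString_eq_zero_of_ne {n : ℕ} {p : Fin n → PauliLabel} {k l : Fin n}
    (hkl : k ≠ l) (hk : p k ≠ PauliLabel.I) (hl : p l ≠ PauliLabel.I) (c : ℂ)
    (f : Fin n → Fin 2 → ℂ) :
    ∑ x : Fin (2 ^ n), (c + ∑ j : Fin n, f j (bitF j x)) * pauliString n p x x = 0 := by
  rw [← finFunctionFinEquiv.sum_comp]
  simp only [pauliString, bitF_finFunctionFinEquiv]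
  exact sum_add_sum_apply_mul_prod_eq_zero (w := fun j t => pauliMat (p j) t t) hkl
    (trace_pauliMat_eq_zero hk) (trace_pauliMat_eq_zero hl) c f

theorem stmt_0_general (n : ℕ) (c : ℂ) (f : Fin n → Fin 2 → ℂ) (p : Fin n → PauliLabel)
    (hI : p ≠ fun _ => PauliLabel.I)
    (hZ : ¬ ∃ k : Fin n, p k = PauliLabel.Z ∧ ∀ j : Fin n, j ≠ k → p j = PauliLabel.I) :
    (1 / (2 : ℂ) ^ n) * ∑ x : Fin (2 ^ n), (c + ∑ j : Fin n, f j (bitF j x)) *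
      pauliString n p x x = 0 := by
  refine mul_eq_zero_of_right _ ?_
  obtain ⟨k, hk⟩ := Function.ne_iff.1 hI
  by_cases hkZ : p k = PauliLabel.Z
  · obtain ⟨l, hlk, hl⟩ : ∃ l, l ≠ k ∧ p l ≠ PauliLabel.I := by
      by_contra! h
      exact hZ ⟨k, hkZ, h⟩
    exact sum_mul_pauliString_eq_zero_of_ne hlk hl hk c f
  · exact Finset.sum_eq_zero fun x _ =>
      mul_eq_zero_of_right _ (pauliString_apply_self_eq_zero hk hkZ x)

/-- If the labeling `p` is neither all-identity nor "exactly one `Z` and identity elsewhere",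
then the Pauli coefficient `α_P = 2^{-n} ∑_x (a + d·x) P_{x,x}` of the diagonal matrix `D`
with entries `a + d·x` vanishes. -/
theorem stmt_0 (n : ℕ) (hn : 1 ≤ n) (a d : ℝ) (p : Fin n → PauliLabel)
    (hI : p ≠ fun _ => PauliLabel.I)
    (hZ : ¬ ∃ k : Fin n, p k = PauliLabel.Z ∧ ∀ j : Fin n, j ≠ k → p j = PauliLabel.I) :
    (1 / (2 : ℂ) ^ n) * ∑ x : Fin (2 ^ n), ((a : ℂ) + (d : ℂ) * (x.val : ℂ)) *
      pauliString n p x x = 0 := by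
  simpa only [natCast_eq_sum_bitF, Finset.mul_sum] using
    stmt_0_general n a (fun j t => d * ((t : ℕ) * 2 ^ (j : ℕ))) p hI hZ
end

section
/- The diagonal matrix D admits the exact Pauli decomposition D = (a + d·(2^n − 1)/2)·I + Σ_{j=0}^{n−1} (−(d/2)·2^j)·Z_j, where I is the 2^n × 2^n identity matrix; that is, the only Pauli strings appearing with nonzero coefficient in the Pauli expansion of D are the identity, with coefficient a + d·(2^n − 1)/2, and the single-qubit Z strings Z_j, with coefficients −(d/2)·2^j. -/
/-- The `j`-th binary digit of `x`, as a natural number in `{0,1}`. -/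
def bitN (j x : ℕ) : ℕ := if Nat.testBit x j then 1 else 0

/-- The `2^n × 2^n` diagonal matrix `D` with diagonal entries `D_{x,x} = a + d·x`. -/
noncomputable def Dmat (n : ℕ) (a d : ℝ) : Matrix (Fin (2 ^ n)) (Fin (2 ^ n)) ℂ :=
  Matrix.diagonal fun x => (a : ℂ) + (d : ℂ) * (x.val : ℂ)

/-- The single-qubit Pauli-`Z` string on qubit `j`: the `2^n × 2^n` diagonal matrix with
diagonal entries `(Z_j)_{x,x} = (−1)^{bit_j(x)}`. -/
noncomputable def Zstring (n : ℕ) (j : Fin n) : Matrix (Fin (2 ^ n)) (Fin (2 ^ n)) ℂ :=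
  Matrix.diagonal fun x => (-1 : ℂ) ^ bitN j.val x.val

/-!
Each binary digit is an affine function of its sign character, `bit_j = (1 - (-1)^{bit_j}) / 2`, so
substituting this in `x = ∑ j, 2^j bit_j(x)` writes the diagonal `a + d x` as a constant plus a
combination of the diagonals of the `Z_j`. The constant collects `∑ j, 2^j = 2^n - 1`.
-/

open Matrix (diagonal)

theorem sum_range_two_pow_mul_bitN (n x : ℕ) :
    ∑ j ∈ Finset.range n, 2 ^ j * bitN j x = x % 2 ^ n := by
  induction n with
  | zero => simp [Nat.mod_one]
  | succ n ih =>
    have bitN_eq : bitN n x = x / 2 ^ n % 2 := by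
      rw [← Nat.toNat_testBit, bitN, Bool.toNat, Bool.cond_eq_ite]
    rw [Finset.sum_range_succ, ih, bitN_eq, Nat.mod_pow_succ]

theorem natCast_eq_sum_two_pow_mul_bitN {R : Type*} [Semiring R] {n : ℕ} (x : Fin (2 ^ n)) :
    (x.val : R) = ∑ j : Fin n, (2 : R) ^ (j : ℕ) * (bitN j x : R) := by
  have hx : x.val = ∑ j : Fin n, 2 ^ (j : ℕ) * bitN j x := by
    rw [Fin.sum_univ_eq_sum_range (fun j => 2 ^ j * bitN j x), sum_range_two_pow_mul_bitN,
      Nat.mod_eq_of_lt x.isLt]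
  exact_mod_cast congrArg (Nat.cast (R := R)) hx

theorem neg_one_pow_bitN {R : Type*} [Ring R] (j x : ℕ) :
    (-1 : R) ^ bitN j x = 1 - 2 * (bitN j x : R) := by
  unfold bitN
  split_ifs <;> norm_num

theorem diagonal_add_sum_mul {K ι m : Type*} [Field K] [NeZero (2 : K)] [Fintype ι]
    [DecidableEq m] (a : K) (w : ι → K) (b : ι → m → K) :
    diagonal (fun x => a + ∑ j, w j * b j x) =
      (a + (∑ j, w j) / 2) • (1 : Matrix m m K) +
        ∑ j, (-(w j / 2)) • diagonal (fun x => 1 - 2 * b j x) := by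
  have entry (x : m) : a + ∑ j, w j * b j x =
      a + (∑ j, w j) / 2 + ∑ j, -(w j / 2) * (1 - 2 * b j x) := by
    rw [add_assoc, Finset.sum_div, ← Finset.sum_add_distrib]
    congr 1
    refine Finset.sum_congr rfl fun j _ => ?_
    field_simp
    ring
  ext x y
  obtain rfl | hxy := eq_or_ne x y
  · simpa [Matrix.sum_apply] using entry x
  · simp [Matrix.sum_apply, hxy]

theorem stmt_1_general {K : Type*} [Field K] [NeZero (2 : K)] (n : ℕ) (a d : K) :
    diagonal (fun x : Fin (2 ^ n) => a + d * (x.val : K)) =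
      (a + d * (2 ^ n - 1) / 2) • (1 : Matrix (Fin (2 ^ n)) (Fin (2 ^ n)) K) +
        ∑ j : Fin n, (-(d / 2) * 2 ^ (j : ℕ)) •
          diagonal (fun x : Fin (2 ^ n) => (-1 : K) ^ bitN j x) := by
  have sum_weights : ∑ j : Fin n, d * (2 : K) ^ (j : ℕ) = d * (2 ^ n - 1) := by
    rw [← Finset.mul_sum, Fin.sum_univ_eq_sum_range (fun j => (2 : K) ^ j), ← geom_sum_mul]
    ring
  calc diagonal (fun x : Fin (2 ^ n) => a + d * (x.val : K))
      = diagonal (fun x : Fin (2 ^ n) => a + ∑ j : Fin n, d * 2 ^ (j : ℕ) * (bitN j x : K)) := by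
        simp only [natCast_eq_sum_two_pow_mul_bitN, Finset.mul_sum, mul_assoc]
    _ = (a + (∑ j : Fin n, d * 2 ^ (j : ℕ)) / 2) • (1 : Matrix (Fin (2 ^ n)) (Fin (2 ^ n)) K) +
          ∑ j : Fin n, (-(d * 2 ^ (j : ℕ) / 2)) •
            diagonal (fun x : Fin (2 ^ n) => 1 - 2 * (bitN j x : K)) :=
        diagonal_add_sum_mul ..
    _ = _ := by
        simp only [sum_weights, neg_one_pow_bitN, neg_mul, div_mul_eq_mul_div]

/-- The diagonal matrix `D` admits the exact Pauli decomposition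
`D = (a + d·(2^n − 1)/2)·I + ∑_j (−(d/2)·2^j)·Z_j`. -/
theorem stmt_1 (n : ℕ) (hn : 1 ≤ n) (a d : ℝ) :
    Dmat n a d
      = ((a : ℂ) + (d : ℂ) * ((2 : ℂ) ^ n - 1) / 2) •
          (1 : Matrix (Fin (2 ^ n)) (Fin (2 ^ n)) ℂ)
        + ∑ j : Fin n, (-((d : ℂ) / 2) * (2 : ℂ) ^ (j : ℕ)) • Zstring n j :=
  stmt_1_general n (a : ℂ) (d : ℂ)
end
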